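/- Let (0, x*) ∈ D. Then V(0, x*, 0) = 0, and there exists a C^∞ function φ of one real variable such that the germ of V at the singular point (0, x*, 0) is C^∞-smoothly orbitally equivalent to the germ at 0 of the vector field ξ̇ = n·ξ + φ(ζ)·ηⁿ, η̇ = η, ζ̇ = 0. -/

import Mathlib

open Filter Topology

/-- Partial derivative of `g : ℝ² → ℝ` with respect to the first coordinate. -/
noncomputable def d1 (g : ℝ × ℝ → ℝ) (q : ℝ × ℝ) : ℝ := fderiv ℝ g q ((1 : ℝ), (0 : ℝ))

/-- Partial derivative of `g : ℝ² → ℝ` with respect to the second coordinate. -/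
noncomputable def d2 (g : ℝ × ℝ → ℝ) (q : ℝ × ℝ) : ℝ := fderiv ℝ g q ((0 : ℝ), (1 : ℝ))

/-- Two vector fields `V`, `N` with marked points `x₀`, `y₀` are `C^∞`-smoothly orbitally
equivalent (as germs) if there are open neighborhoods `U ∋ x₀`, `U' ∋ y₀` with `U`
contained in the domain `Dom`, a `C^∞` diffeomorphism `Φ : U → U'` with `Φ x₀ = y₀`, and
a `C^∞` nowhere-vanishing function `h : U → ℝ` with `DΦ(x)·V(x) = h(x)·N(Φ(x))` on `U`. -/
def OrbEquiv {E : Type*} [NormedAddCommGroup E] [NormedSpace ℝ E]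
    (Dom : Set E) (V N : E → E) (x₀ y₀ : E) : Prop :=
  ∃ (U U' : Set E) (Φ Ψ : E → E) (h : E → ℝ),
    IsOpen U ∧ IsOpen U' ∧ x₀ ∈ U ∧ y₀ ∈ U' ∧ U ⊆ Dom ∧
    ContDiffOn ℝ (⊤ : ℕ∞) Φ U ∧ ContDiffOn ℝ (⊤ : ℕ∞) Ψ U' ∧
    Φ x₀ = y₀ ∧ Set.MapsTo Φ U U' ∧ Set.MapsTo Ψ U' U ∧
    (∀ x ∈ U, Ψ (Φ x) = x) ∧ (∀ y ∈ U', Φ (Ψ y) = y) ∧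
    ContDiffOn ℝ (⊤ : ℕ∞) h U ∧ (∀ x ∈ U, h x ≠ 0) ∧
    ∀ x ∈ U, fderiv ℝ Φ x (V x) = h x • N (Φ x)

section Superposition

variable {K : Type*} [TopologicalSpace K] [CompactSpace K]

/-- Pointwise application of a continuous family of continuous linear maps. -/
noncomputable def pointwiseApply (K : Type*) [TopologicalSpace K] [CompactSpace K]
    (E F : Type*) [NormedAddCommGroup E] [NormedSpace ℝ E]
    [NormedAddCommGroup F] [NormedSpace ℝ F] :
    C(K, E →L[ℝ] F) →L[ℝ] C(K, E) →L[ℝ] C(K, F) :=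
  LinearMap.mkContinuous₂
    (LinearMap.mk₂ ℝ
      (fun (A : C(K, E →L[ℝ] F)) (u : C(K, E)) =>
        (⟨fun x => A x (u x), A.continuous.clm_apply u.continuous⟩ : C(K, F)))
      (fun _ _ _ => by ext; simp) (fun _ _ _ => by ext; simp)
      (fun _ _ _ => by ext; simp) (fun _ _ _ => by ext; simp)) 1
    (fun A u => by
      rw [one_mul, ContinuousMap.norm_le _ (by positivity)]
      intro x
      refine ((A x).le_opNorm (u x)).trans ?_
      gcongr
      · exact A.norm_coe_le_norm x
      · exact u.norm_coe_le_norm x)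

@[simp]
theorem pointwiseApply_apply {E F : Type*} [NormedAddCommGroup E] [NormedSpace ℝ E]
    [NormedAddCommGroup F] [NormedSpace ℝ F]
    (A : C(K, E →L[ℝ] F)) (u : C(K, E)) (x : K) : pointwiseApply K E F A u x = A x (u x) := rfl

theorem hasFDerivAt_superposition {E F : Type*} [NormedAddCommGroup E] [NormedSpace ℝ E]
    [NormedAddCommGroup F] [NormedSpace ℝ F] (g : C(E, F)) (g' : C(E, E →L[ℝ] F))
    (hg : ∀ x, HasFDerivAt g (g' x) x) (u : C(K, E)) :
    HasFDerivAt (fun v : C(K, E) => g.comp v) (pointwiseApply K E F (g'.comp u)) u := by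
  rw [hasFDerivAt_iff_isLittleO_nhds_zero, Asymptotics.isLittleO_iff]
  intro ε hε
  have hc : Continuous fun v : C(K, E) => g'.comp v := ContinuousMap.continuous_postcomp g'
  obtain ⟨δ, hδ, H⟩ := (Metric.continuousAt_iff (α := C(K, E)) (β := C(K, E →L[ℝ] F))).1
    (hc.continuousAt (x := u)) ε hε
  filter_upwards [Metric.ball_mem_nhds (0 : C(K, E)) hδ] with w hw
  rw [mem_ball_zero_iff] at hw
  rw [ContinuousMap.norm_le _ (by positivity)]
  intro x
  have key := (convex_segment (𝕜 := ℝ) (u x) (u x + w x)).norm_image_sub_le_of_norm_hasFDerivWithin_le'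
    (f := g) (f' := fun y => g' y) (φ := g' (u x)) (C := ε)
    (fun y _ => (hg y).hasFDerivWithinAt) ?_ (left_mem_segment ℝ _ _) (right_mem_segment ℝ _ _)
  · have h2 := w.norm_coe_le_norm x
    simp only [add_sub_cancel_left] at key
    refine key.trans ?_
    gcongr
  · rintro y hy
    rw [segment_eq_image'] at hy
    obtain ⟨s, hs, rfl⟩ := hy
    have h1 : dist (u + s • w) u < δ := by
      rw [dist_eq_norm, add_sub_cancel_left, norm_smul, Real.norm_of_nonneg hs.1]
      exact (mul_le_of_le_one_left (norm_nonneg _) hs.2).trans_lt hw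
    simp only [add_sub_cancel_left]
    rw [← dist_eq_norm]
    exact (ContinuousMap.dist_apply_le_dist (f := g'.comp (u + s • w)) (g := g'.comp u) x).trans
      (H h1).le

theorem contDiff_superposition_nat (k : ℕ) : ∀ {E F : Type} [NormedAddCommGroup E] [NormedSpace ℝ E]
    [NormedAddCommGroup F] [NormedSpace ℝ F] (g : C(E, F)), ContDiff ℝ k g →
    ContDiff ℝ k (fun v : C(K, E) => g.comp v) := by
  induction k with
  | zero =>
    intro E F _ _ _ _ g _
    exact contDiff_zero.2 (ContinuousMap.continuous_postcomp g)
  | succ k ih =>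
    intro E F _ _ _ _ g hg
    push_cast at hg ⊢
    obtain ⟨g', hg', hd⟩ := contDiff_succ_iff_hasFDerivAt.1 hg
    refine contDiff_succ_iff_hasFDerivAt.2
      ⟨fun v => pointwiseApply K E F ((⟨g', hg'.continuous⟩ : C(E, E →L[ℝ] F)).comp v), ?_,
        fun u => hasFDerivAt_superposition g ⟨g', hg'.continuous⟩ hd u⟩
    exact (pointwiseApply K E F).contDiff.comp (ih ⟨g', hg'.continuous⟩ hg')

theorem contDiff_superposition {E F : Type} [NormedAddCommGroup E] [NormedSpace ℝ E]
    [NormedAddCommGroup F] [NormedSpace ℝ F] (g : C(E, F)) (hg : ContDiff ℝ (⊤ : ℕ∞) g) :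
    ContDiff ℝ (⊤ : ℕ∞) (fun v : C(K, E) => g.comp v) :=
  contDiff_infty.2 fun k => contDiff_superposition_nat k g (contDiff_infty.1 hg k)

end Superposition

section Volterra

/-- The operator `u ↦ (s ↦ ∫₀ˢ u)` on continuous functions on the unit interval. -/
noncomputable def volterra (E : Type*) [NormedAddCommGroup E] [NormedSpace ℝ E] :
    C(unitInterval, E) →L[ℝ] C(unitInterval, E) :=
  LinearMap.mkContinuous
    { toFun := fun u =>
        ⟨fun s => ∫ r in (0 : ℝ)..s, u (Set.projIcc 0 1 zero_le_one r),
          (intervalIntegral.continuous_primitive (fun a b =>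
            (u.continuous.comp continuous_projIcc).intervalIntegrable a b) 0).comp
            continuous_subtype_val⟩
      map_add' := fun u v => by
        ext s
        exact intervalIntegral.integral_add
          ((u.continuous.comp continuous_projIcc).intervalIntegrable _ _)
          ((v.continuous.comp continuous_projIcc).intervalIntegrable _ _)
      map_smul' := fun c u => by
        ext s
        exact intervalIntegral.integral_smul _ _ } 1
    (fun u => by
      rw [one_mul, ContinuousMap.norm_le _ (norm_nonneg _)]
      intro s
      refine (intervalIntegral.norm_integral_le_of_norm_le_const (C := ‖u‖)
        (fun r _ => u.norm_coe_le_norm _)).trans ?_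
      rw [sub_zero, abs_of_nonneg s.2.1]
      exact mul_le_of_le_one_right (norm_nonneg _) s.2.2)

theorem volterra_apply {E : Type*} [NormedAddCommGroup E] [NormedSpace ℝ E]
    (u : C(unitInterval, E)) (s : unitInterval) :
    volterra E u s = ∫ r in (0 : ℝ)..s, u (Set.projIcc 0 1 zero_le_one r) := rfl

end Volterra

/-- Smooth inverse function theorem, with an open set on which the inverse is smooth. -/
theorem exists_smooth_openPartialHomeomorph {X : Type*} [NormedAddCommGroup X] [NormedSpace ℝ X]
    [CompleteSpace X] {F : X → X} {U : Set X} (hU : IsOpen U) (hF : ContDiffOn ℝ (⊤ : ℕ∞) F U)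
    {a : X} (ha : a ∈ U) {F' : X ≃L[ℝ] X} (hF' : HasFDerivAt F (F' : X →L[ℝ] X) a) :
    ∃ e : OpenPartialHomeomorph X X, (∀ x, e x = F x) ∧ a ∈ e.source ∧ e.source ⊆ U ∧
      ContDiffOn ℝ (⊤ : ℕ∞) e.symm e.target := by
  have hFa : ContDiffAt ℝ (⊤ : ℕ∞) F a := hF.contDiffAt (hU.mem_nhds ha)
  let e₀ := hFa.toOpenPartialHomeomorph F hF' (by simp)
  have he₀ : ∀ x, e₀ x = F x := fun x => rfl
  have hcont : ContinuousOn (fderiv ℝ F) U := hF.continuousOn_fderiv_of_isOpen hU (by simp)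
  let W := U ∩ fderiv ℝ F ⁻¹' (Set.range ((↑) : (X ≃L[ℝ] X) → X →L[ℝ] X))
  have hW : IsOpen W := hcont.isOpen_inter_preimage hU (ContinuousLinearEquiv.isOpen)
  refine ⟨e₀.restrOpen W hW, fun x => rfl, ?_, ?_, ?_⟩
  · refine ⟨hFa.mem_toOpenPartialHomeomorph_source hF' (by simp), ha, ?_⟩
    exact ⟨F', hF'.fderiv.symm⟩
  · intro x hx
    exact hx.2.1
  · intro y hy
    have hx := (e₀.restrOpen W hW).map_target hy
    obtain ⟨f', hf'⟩ := hx.2.2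
    have hxU := hx.2.1
    have hd : HasFDerivAt F (f' : X →L[ℝ] X) ((e₀.restrOpen W hW).symm y) := by
      rw [hf']
      exact ((hF.contDiffAt (hU.mem_nhds hxU)).differentiableAt (by simp)).hasFDerivAt
    exact ((e₀.restrOpen W hW).contDiffAt_symm hy hd
      (hF.contDiffAt (hU.mem_nhds hxU))).contDiffWithinAt

/-- Local solvability, uniqueness of small solutions and smooth dependence on the initial value for
`u' = g (l, u)` on the unit interval, near a zero at which `g` vanishes to second order. -/
theorem exists_smooth_solution {A E : Type} [NormedAddCommGroup A] [NormedSpace ℝ A]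
    [NormedAddCommGroup E] [NormedSpace ℝ E] [CompleteSpace E] (g : A × E → E)
    (hg : ContDiff ℝ (⊤ : ℕ∞) g) (l : C(unitInterval, A)) (h0 : ∀ s, g (l s, 0) = 0)
    (h1 : ∀ s, HasFDerivAt (fun v => g (l s, v)) (0 : E →L[ℝ] E) 0) :
    ∃ (S : E → C(unitInterval, E)) (O : Set E) (ε : ℝ), 0 < ε ∧ IsOpen O ∧ 0 ∈ O ∧
      ContDiffOn ℝ (⊤ : ℕ∞) S O ∧ S 0 = 0 ∧
      HasFDerivAt (fun c => S c 1) (ContinuousLinearMap.id ℝ E) 0 ∧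
      (∀ c ∈ O, ∀ s : unitInterval, S c s = c + ∫ r in (0 : ℝ)..s,
        g (l (Set.projIcc 0 1 zero_le_one r), S c (Set.projIcc 0 1 zero_le_one r))) ∧
      ∀ c u, ‖u‖ < ε → (∀ s : unitInterval, u s = c + ∫ r in (0 : ℝ)..s,
        g (l (Set.projIcc 0 1 zero_le_one r), u (Set.projIcc 0 1 zero_le_one r))) → u = S c := by
  let gc : C(A × E, E) := ⟨g, hg.continuous⟩
  let iA : C(unitInterval, A) →L[ℝ] C(unitInterval, A × E) :=
    (ContinuousLinearMap.inl ℝ A E).compLeftContinuous ℝ unitInterval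
  let iE : C(unitInterval, E) →L[ℝ] C(unitInterval, A × E) :=
    (ContinuousLinearMap.inr ℝ A E).compLeftContinuous ℝ unitInterval
  let P : C(unitInterval, E) → C(unitInterval, A × E) := fun u => iA l + iE u
  have hPapp : ∀ u s, P u s = (l s, u s) := fun u s => by
    simp [P, iA, iE]
  have hP : ContDiff ℝ (⊤ : ℕ∞) P := contDiff_const.add iE.contDiff
  let F : C(unitInterval, E) → C(unitInterval, E) := fun u => u - volterra E (gc.comp (P u))
  have hF : ContDiff ℝ (⊤ : ℕ∞) F :=
    contDiff_id.sub ((volterra E).contDiff.comp ((contDiff_superposition gc hg).comp hP))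
  have hFapp : ∀ u s, F u s = u s - ∫ r in (0 : ℝ)..s,
      g (l (Set.projIcc 0 1 zero_le_one r), u (Set.projIcc 0 1 zero_le_one r)) := by
    intro u s
    change u s - volterra E (gc.comp (P u)) s = _
    rw [volterra_apply]
    simp only [ContinuousMap.comp_apply, hPapp]
    rfl
  have hF0 : F 0 = 0 := by
    ext s
    rw [hFapp]
    simp [h0]
  have hg' : ∀ z, HasFDerivAt gc (fderiv ℝ g z) z := fun z =>
    (hg.differentiable (by simp) z).hasFDerivAt
  let g' : C(A × E, A × E →L[ℝ] E) := ⟨fderiv ℝ g, hg.continuous_fderiv (by simp)⟩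
  have hF' : HasFDerivAt F
      ((ContinuousLinearEquiv.refl ℝ C(unitInterval, E) :
        C(unitInterval, E) →L[ℝ] C(unitInterval, E))) 0 := by
    have hPd : HasFDerivAt P iE 0 := iE.hasFDerivAt.const_add _
    have hd := (hasFDerivAt_id (𝕜 := ℝ) (0 : C(unitInterval, E))).sub
      ((volterra E).hasFDerivAt.comp 0 ((hasFDerivAt_superposition gc g' hg' (P 0)).comp 0 hPd))
    refine hd.congr_fderiv ?_
    have hz : (pointwiseApply unitInterval (A × E) E (g'.comp (P 0))).comp iE = 0 := by
      ext u s
      have hk : HasFDerivAt (fun v => g (l s, v))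
          ((fderiv ℝ g (l s, 0)).comp (ContinuousLinearMap.inr ℝ A E)) 0 :=
        (hg' (l s, 0)).comp 0 (hasFDerivAt_prodMk_right (l s) 0)
      have := hk.unique (h1 s)
      have h2 := DFunLike.congr_fun this (u s)
      have h3 : P 0 s = (l s, 0) := by simpa using hPapp 0 s
      change fderiv ℝ g (P 0 s) (iE u s) = 0
      rw [h3]
      exact h2
    rw [hz]
    ext u
    simp
  obtain ⟨e, he, hes, -, hesymm⟩ := exists_smooth_openPartialHomeomorph isOpen_univ
    hF.contDiffOn (Set.mem_univ 0) hF'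
  have he0 : e 0 = 0 := (he 0).trans hF0
  have hes0 : e.symm 0 = 0 := by
    conv_lhs => rw [← he0]
    exact e.left_inv hes
  have het : (0 : C(unitInterval, E)) ∈ e.target := he0 ▸ e.map_source hes
  let cst : E →L[ℝ] C(unitInterval, E) :=
    LinearMap.mkContinuous
      { toFun := fun c => ContinuousMap.const _ c
        map_add' := fun _ _ => rfl
        map_smul' := fun _ _ => rfl } 1 (fun c => by
          rw [one_mul, ContinuousMap.norm_le _ (norm_nonneg _)]
          exact fun _ => le_rfl)
  have hcst : ∀ c s, cst c s = c := fun c s => rfl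
  obtain ⟨ε, hε, hball⟩ := Metric.isOpen_iff.1 e.open_source 0 hes
  refine ⟨fun c => e.symm (cst c), cst ⁻¹' e.target, ε, hε,
    e.open_target.preimage cst.continuous, ?_, ?_, ?_, ?_, ?_, ?_⟩
  · simpa using het
  · exact hesymm.comp cst.contDiff.contDiffOn (fun _ h => h)
  · simpa using hes0
  · have hsd : HasFDerivAt e.symm
        ((ContinuousLinearEquiv.refl ℝ C(unitInterval, E)).symm :
          C(unitInterval, E) →L[ℝ] C(unitInterval, E)) (cst 0) := by
      refine e.hasFDerivAt_symm ?_ ?_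
      · simpa using het
      · rw [map_zero, hes0]
        exact hF'.congr_of_eventuallyEq (Eventually.of_forall he)
    have h2 := (ContinuousMap.evalCLM ℝ (1 : unitInterval)
      (M := E)).hasFDerivAt.comp (0 : E) (hsd.comp (0 : E) cst.hasFDerivAt)
    exact h2.congr_fderiv (by ext c; rfl)
  · intro c hc s
    have h2 : F (e.symm (cst c)) = cst c := (he _).symm.trans (e.right_inv hc)
    have h3 := DFunLike.congr_fun h2 s
    rw [hFapp, hcst] at h3
    exact sub_eq_iff_eq_add.1 h3
  · intro c u hu heq
    have h2 : e u = cst c := by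
      rw [he]
      ext s
      rw [hFapp, hcst]
      exact sub_eq_iff_eq_add.2 (heq s)
    change u = e.symm (cst c)
    rw [← h2, e.left_inv (hball (by simpa using hu))]

/-- First-order Taylor formula with smooth remainders in the first and third variables. -/
theorem exists_hadamard (f : ℝ × ℝ × ℝ → ℝ) (hf : ContDiff ℝ (⊤ : ℕ∞) f) :
    ∃ r₁ r₂ : ℝ × ℝ × ℝ → ℝ, ContDiff ℝ (⊤ : ℕ∞) r₁ ∧ ContDiff ℝ (⊤ : ℕ∞) r₂ ∧
      ∀ t x p, f (t, x, p) = f (0, x, 0) + t * r₁ (t, x, p) + p * r₂ (t, x, p) := by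
  let c₁ : C(unitInterval, ℝ × ℝ × ℝ) := ⟨fun s => ((s : ℝ), 0, 0), by fun_prop⟩
  let c₂ : C(unitInterval, ℝ × ℝ × ℝ) := ⟨fun s => (0, 1, 0), by fun_prop⟩
  let c₃ : C(unitInterval, ℝ × ℝ × ℝ) := ⟨fun s => (0, 0, (s : ℝ)), by fun_prop⟩
  let path : ℝ × ℝ × ℝ → C(unitInterval, ℝ × ℝ × ℝ) :=
    fun z => z.1 • c₁ + z.2.1 • c₂ + z.2.2 • c₃
  have hpath : ContDiff ℝ (⊤ : ℕ∞) path := by fun_prop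
  have hpapp : ∀ z s, path z s = ((s : ℝ) * z.1, z.2.1, (s : ℝ) * z.2.2) := by
    intro z s
    simp [path, c₁, c₂, c₃, mul_comm]
  have hdf : ∀ v, ContDiff ℝ (⊤ : ℕ∞) (fun z => fderiv ℝ f z v) := fun v =>
    (hf.fderiv_right (m := (⊤ : ℕ∞)) (by simp)).clm_apply contDiff_const
  let R : (ℝ × ℝ × ℝ) → (ℝ × ℝ × ℝ) → ℝ := fun v z =>
    ∫ r in (0 : ℝ)..1, fderiv ℝ f (r * z.1, z.2.1, r * z.2.2) v
  have hR : ∀ v, ContDiff ℝ (⊤ : ℕ∞) (R v) := by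
    intro v
    have h1 : ContDiff ℝ (⊤ : ℕ∞) (fun z => ContinuousMap.evalCLM ℝ (1 : unitInterval) (M := ℝ)
        (volterra ℝ ((⟨_, (hdf v).continuous⟩ : C(ℝ × ℝ × ℝ, ℝ)).comp (path z)))) :=
      (ContinuousLinearMap.contDiff _).comp ((volterra ℝ).contDiff.comp
        ((contDiff_superposition _ (hdf v)).comp hpath))
    convert h1 using 1
    ext z
    change _ = volterra ℝ _ 1
    rw [volterra_apply]
    refine intervalIntegral.integral_congr fun r hr => ?_
    rw [Set.uIcc_of_le zero_le_one] at hr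
    simp only [ContinuousMap.comp_apply, hpapp, ContinuousMap.coe_mk]
    rw [Set.projIcc_of_mem _ hr]
  refine ⟨R (1, 0, 0), R (0, 0, 1), hR _, hR _, fun t x p => ?_⟩
  have hder : ∀ r : ℝ, HasDerivAt (fun r : ℝ => f (r * t, x, r * p))
      (t * fderiv ℝ f (r * t, x, r * p) (1, 0, 0) + p * fderiv ℝ f (r * t, x, r * p) (0, 0, 1)) r := by
    intro r
    have h1 : HasDerivAt (fun r : ℝ => (r * t, x, r * p)) (t, 0, p) r := by
      have ha := (hasDerivAt_id r).mul_const t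
      have hb := (hasDerivAt_id r).mul_const p
      simp only [id, one_mul] at ha hb
      exact ha.prodMk ((hasDerivAt_const r x).prodMk hb)
    have h2 := ((hf.differentiable (by simp) (r * t, x, r * p)).hasFDerivAt).comp_hasDerivAt r h1
    refine h2.congr_deriv ?_
    have : ((t, 0, p) : ℝ × ℝ × ℝ) = t • ((1, 0, 0) : ℝ × ℝ × ℝ) + p • ((0, 0, 1) : ℝ × ℝ × ℝ) := by
      simp
    rw [this, map_add, map_smul, map_smul, smul_eq_mul, smul_eq_mul]
  have hcont : ∀ v, Continuous fun r : ℝ => fderiv ℝ f (r * t, x, r * p) v := fun v =>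
    (hdf v).continuous.comp (by fun_prop)
  have hint := intervalIntegral.integral_eq_sub_of_hasDerivAt (a := 0) (b := 1)
    (fun r _ => hder r)
    ((((hcont _).const_mul t).add ((hcont _).const_mul p)).intervalIntegrable _ _)
  rw [intervalIntegral.integral_add (((hcont _).const_mul t).intervalIntegrable _ _)
    (((hcont _).const_mul p).intervalIntegrable _ _), intervalIntegral.integral_const_mul,
    intervalIntegral.integral_const_mul] at hint
  simp only [one_mul, zero_mul] at hint
  change _ = f (0, x, 0) + t * (∫ r in (0 : ℝ)..1, fderiv ℝ f (r * t, x, r * p) (1, 0, 0)) +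
    p * (∫ r in (0 : ℝ)..1, fderiv ℝ f (r * t, x, r * p) (0, 0, 1))
  linarith

/-- A shift `p ↦ p + a t x` of the third coordinate, vanishing on `t = 0`, brings the field
`(t, t K, n p + t ^ (m + 1) r + t p B + p ^ 2 C)` to a form in which the terms free of `p` start
with `φ x * t ^ n`. -/
theorem exists_reduction (n j : ℕ) : ∀ (m : ℕ), m + 1 + j = n → ∀ (K r B C : ℝ × ℝ × ℝ → ℝ),
    ContDiff ℝ (⊤ : ℕ∞) K → ContDiff ℝ (⊤ : ℕ∞) r → ContDiff ℝ (⊤ : ℕ∞) B →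
    ContDiff ℝ (⊤ : ℕ∞) C →
    ∃ (a at' ax : ℝ × ℝ → ℝ) (φ : ℝ → ℝ) (r' B' C' : ℝ × ℝ × ℝ → ℝ),
      ContDiff ℝ (⊤ : ℕ∞) a ∧ ContDiff ℝ (⊤ : ℕ∞) φ ∧ ContDiff ℝ (⊤ : ℕ∞) r' ∧
      ContDiff ℝ (⊤ : ℕ∞) B' ∧ ContDiff ℝ (⊤ : ℕ∞) C' ∧ (∀ x, a (0, x) = 0) ∧
      (∀ q, HasFDerivAt a (at' q • ContinuousLinearMap.fst ℝ ℝ ℝ +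
        ax q • ContinuousLinearMap.snd ℝ ℝ ℝ) q) ∧
      ∀ t x p, n * p + φ x * t ^ n + t ^ (n + 1) * r' (t, x, p) + t * p * B' (t, x, p) +
          p ^ 2 * C' (t, x, p) + t * at' (t, x) + t * K (t, x, p + a (t, x)) * ax (t, x) =
        n * (p + a (t, x)) + t ^ (m + 1) * r (t, x, p + a (t, x)) +
          t * (p + a (t, x)) * B (t, x, p + a (t, x)) +
          (p + a (t, x)) ^ 2 * C (t, x, p + a (t, x)) := by
  induction j with
  | zero =>
    rintro m rfl K r B C hK hr hB hC
    obtain ⟨r₁, r₂, hr₁, hr₂, hrr⟩ := exists_hadamard r hr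
    refine ⟨fun _ => 0, fun _ => 0, fun _ => 0, fun x => r (0, x, 0), r₁,
      fun z => B z + z.1 ^ m * r₂ z, C, contDiff_const, by fun_prop, hr₁, by fun_prop, hC,
      fun _ => rfl, fun q => ?_, fun t x p => ?_⟩
    · simpa using hasFDerivAt_const (𝕜 := ℝ) (0 : ℝ) q
    · simp only [add_zero, mul_zero]
      rw [hrr t x p]
      ring
  | succ j ih =>
    rintro m hm K r B C hK hr hB hC
    obtain ⟨r₁, r₂, hr₁, hr₂, hrr⟩ := exists_hadamard r hr
    let b : ℝ → ℝ := fun x => -r (0, x, 0) / (j + 1)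
    have hb : ContDiff ℝ (⊤ : ℕ∞) b := by fun_prop
    have hb' : ContDiff ℝ (⊤ : ℕ∞) (deriv b) := (contDiff_infty_iff_deriv.1 hb).2
    have hbr : ∀ x, r (0, x, 0) = -(j + 1) * b x := fun x => by
      have : (j + 1 : ℝ) ≠ 0 := by positivity
      simp only [b]
      field_simp
    let sh : ℝ × ℝ × ℝ → ℝ × ℝ × ℝ := fun z => (z.1, z.2.1, z.2.2 + b z.2.1 * z.1 ^ (m + 1))
    have hsh : ContDiff ℝ (⊤ : ℕ∞) sh := by fun_prop
    obtain ⟨a, at', ax, φ, r', B', C', ha, hφ, hr', hB', hC', ha0, had, heq⟩ :=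
      ih (m + 1) (by omega) (fun z => K (sh z))
        (fun z => r₁ (sh z) + b z.2.1 * z.1 ^ m * r₂ (sh z) + b z.2.1 * B (sh z) +
          b z.2.1 ^ 2 * z.1 ^ m * C (sh z) - deriv b z.2.1 * K (sh z))
        (fun z => z.1 ^ m * r₂ (sh z) + B (sh z) + 2 * b z.2.1 * z.1 ^ m * C (sh z))
        (fun z => C (sh z)) (by fun_prop) (by fun_prop) (by fun_prop) (by fun_prop)
    refine ⟨fun q => a q + b q.2 * q.1 ^ (m + 1), fun q => at' q + (m + 1) * b q.2 * q.1 ^ m,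
      fun q => ax q + deriv b q.2 * q.1 ^ (m + 1), φ, r', B', C', by fun_prop, hφ, hr', hB', hC',
      fun x => by simp [ha0], fun q => ?_, fun t x p => ?_⟩
    · have h1 : HasFDerivAt (fun q : ℝ × ℝ => b q.2)
          (deriv b q.2 • ContinuousLinearMap.snd ℝ ℝ ℝ) q :=
        ((hb.differentiable (by simp) q.2).hasDerivAt).comp_hasFDerivAt q hasFDerivAt_snd
      have h2 : HasFDerivAt (fun q : ℝ × ℝ => q.1 ^ (m + 1))
          (((m + 1 : ℕ) * q.1 ^ m) • ContinuousLinearMap.fst ℝ ℝ ℝ) q := by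
        have := (hasDerivAt_pow (m + 1) q.1).comp_hasFDerivAt q
          (hasFDerivAt_fst (𝕜 := ℝ) (E := ℝ) (F := ℝ))
        rw [Nat.add_sub_cancel] at this
        exact this
      refine ((had q).add (h1.mul h2)).congr_fderiv ?_
      ext <;> simp <;> ring
    · have h1 := heq t x p
      have hsha : sh (t, x, p + a (t, x)) = (t, x, p + (a (t, x) + b x * t ^ (m + 1))) := by
        simp [sh, add_assoc]
      have h2 := hrr t x (p + (a (t, x) + b x * t ^ (m + 1)))
      have hn : (n : ℝ) = m + 1 + (j + 1) := by rw [← hm]; push_cast; ring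
      simp only [hsha] at h1
      simp only [h2, hbr x]
      have h3 : (n : ℝ) * (p + (a (t, x) + b x * t ^ (m + 1))) = n * (p + a (t, x)) +
        (m + 1 + (j + 1)) * b x * t ^ (m + 1) := by rw [← hn]; ring
      rw [h3]
      linear_combination h1

/-- The field `(t, t K, n p + φ x t ^ n + t ^ (n + 1) r + t p B + p ^ 2 C)`, `n = N + 1`, in the
coordinates `(w, η, x)` with `w = p`, `η = t`. -/
noncomputable def reducedField (N : ℕ) (φ : ℝ → ℝ) (K r B C : ℝ × ℝ × ℝ → ℝ) (v : ℝ × ℝ × ℝ) :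
    ℝ × ℝ × ℝ :=
  ((N + 1 : ℝ) * v.1 + φ v.2.2 * v.2.1 ^ (N + 1) +
      v.2.1 ^ (N + 2) * r (v.2.1, v.2.2, v.1) + v.2.1 * v.1 * B (v.2.1, v.2.2, v.1) +
      v.1 ^ 2 * C (v.2.1, v.2.2, v.1),
    v.2.1, v.2.1 * K (v.2.1, v.2.2, v.1))

/-- The flow of the field `n w + φ x η ^ n, η, 0` at time `3 log τ`, `n = N + 1`. -/
noncomputable def scaling (N : ℕ) (φ : ℝ → ℝ) (τ : ℝ) (v : ℝ × ℝ × ℝ) : ℝ × ℝ × ℝ :=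
  (τ ^ (3 * N + 3) * (v.1 + 3 * (φ v.2.2 * v.2.1 ^ (N + 1) * Real.log τ)), τ ^ 3 * v.2.1, v.2.2)

/-- The time-dependent field satisfied by an orbit of `reducedField` after undoing `scaling`;
the time variables are `τ` and `l = τ log τ`. -/
noncomputable def scaledField (N : ℕ) (φ : ℝ → ℝ) (K r B C : ℝ × ℝ × ℝ → ℝ)
    (y : (ℝ × ℝ) × ℝ × ℝ × ℝ) : ℝ × ℝ × ℝ :=
  let τ := y.1.1
  let l := y.1.2
  let w := y.2.1
  let η := y.2.2.1
  let x := y.2.2.2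
  let m := τ * w + 3 * φ x * η ^ (N + 1) * l
  let z := (τ ^ 3 * η, x, τ ^ (3 * N + 2) * m)
  (3 * τ ^ 2 * η * (η ^ (N + 1) * r z) + 3 * τ * η * (m * B z) +
      3 * τ ^ (3 * N) * m * (m * C z) - 9 * τ * l * η * (η ^ (N + 1) * (deriv φ x * K z)),
    0, 3 * τ ^ 2 * η * K z)

section

variable {N : ℕ} {φ : ℝ → ℝ} {K r B C : ℝ × ℝ × ℝ → ℝ}

theorem contDiff_scaledField (hφ : ContDiff ℝ (⊤ : ℕ∞) φ) (hK : ContDiff ℝ (⊤ : ℕ∞) K)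
    (hr : ContDiff ℝ (⊤ : ℕ∞) r) (hB : ContDiff ℝ (⊤ : ℕ∞) B) (hC : ContDiff ℝ (⊤ : ℕ∞) C) :
    ContDiff ℝ (⊤ : ℕ∞) (scaledField N φ K r B C) := by
  have hφ' : ContDiff ℝ (⊤ : ℕ∞) (deriv φ) := (contDiff_infty_iff_deriv.1 hφ).2
  unfold scaledField
  fun_prop

theorem scaledField_zero (τ : ℝ × ℝ) : scaledField N φ K r B C (τ, 0) = 0 := by
  simp [scaledField]

theorem hasFDerivAt_mul_zero {E : Type*} [NormedAddCommGroup E] [NormedSpace ℝ E] {f g : E → ℝ}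
    {a : E} (hf : DifferentiableAt ℝ f a) (hg : DifferentiableAt ℝ g a) (hf0 : f a = 0)
    (hg0 : g a = 0) : HasFDerivAt (fun v => f v * g v) (0 : E →L[ℝ] ℝ) a := by
  refine (hf.hasFDerivAt.mul hg.hasFDerivAt).congr_fderiv ?_
  simp [hf0, hg0]

theorem hasFDerivAt_scaledField_zero (hφ : ContDiff ℝ (⊤ : ℕ∞) φ) (hK : ContDiff ℝ (⊤ : ℕ∞) K)
    (hr : ContDiff ℝ (⊤ : ℕ∞) r) (hB : ContDiff ℝ (⊤ : ℕ∞) B) (hC : ContDiff ℝ (⊤ : ℕ∞) C)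
    (hK0 : K 0 = 0) (τ : ℝ × ℝ) :
    HasFDerivAt (fun v => scaledField N φ K r B C (τ, v)) (0 : ℝ × ℝ × ℝ →L[ℝ] ℝ × ℝ × ℝ) 0 := by
  have hφ' : Differentiable ℝ (deriv φ) :=
    (contDiff_infty_iff_deriv.1 hφ).2.differentiable (by simp)
  replace hφ := hφ.differentiable (by simp)
  replace hK := hK.differentiable (by simp)
  replace hr := hr.differentiable (by simp)
  replace hB := hB.differentiable (by simp)
  replace hC := hC.differentiable (by simp)
  have hw : HasFDerivAt (fun v => (scaledField N φ K r B C (τ, v)).1)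
      (0 : ℝ × ℝ × ℝ →L[ℝ] ℝ) 0 := by
    simp only [scaledField]
    have h := (((hasFDerivAt_mul_zero (a := (0 : ℝ × ℝ × ℝ))
      (f := fun v => 3 * τ.1 ^ 2 * v.2.1) (g := fun v => v.2.1 ^ (N + 1) *
        r (τ.1 ^ 3 * v.2.1, v.2.2, τ.1 ^ (3 * N + 2) *
          (τ.1 * v.1 + 3 * φ v.2.2 * v.2.1 ^ (N + 1) * τ.2)))
      (by fun_prop) (by fun_prop) (by simp) (by simp)).add
      (hasFDerivAt_mul_zero (a := (0 : ℝ × ℝ × ℝ))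
      (f := fun v => 3 * τ.1 * v.2.1) (g := fun v =>
        (τ.1 * v.1 + 3 * φ v.2.2 * v.2.1 ^ (N + 1) * τ.2) *
        B (τ.1 ^ 3 * v.2.1, v.2.2, τ.1 ^ (3 * N + 2) *
          (τ.1 * v.1 + 3 * φ v.2.2 * v.2.1 ^ (N + 1) * τ.2)))
      (by fun_prop) (by fun_prop) (by simp) (by simp))).add
      (hasFDerivAt_mul_zero (a := (0 : ℝ × ℝ × ℝ))
      (f := fun v => 3 * τ.1 ^ (3 * N) * (τ.1 * v.1 + 3 * φ v.2.2 * v.2.1 ^ (N + 1) * τ.2))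
      (g := fun v =>
        (τ.1 * v.1 + 3 * φ v.2.2 * v.2.1 ^ (N + 1) * τ.2) *
        C (τ.1 ^ 3 * v.2.1, v.2.2, τ.1 ^ (3 * N + 2) *
          (τ.1 * v.1 + 3 * φ v.2.2 * v.2.1 ^ (N + 1) * τ.2)))
      (by fun_prop) (by fun_prop) (by simp) (by simp))).sub
      (hasFDerivAt_mul_zero (a := (0 : ℝ × ℝ × ℝ))
      (f := fun v => 9 * τ.1 * τ.2 * v.2.1) (g := fun v => v.2.1 ^ (N + 1) * (deriv φ v.2.2 *
        K (τ.1 ^ 3 * v.2.1, v.2.2, τ.1 ^ (3 * N + 2) *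
          (τ.1 * v.1 + 3 * φ v.2.2 * v.2.1 ^ (N + 1) * τ.2))))
      (by fun_prop) (by fun_prop) (by simp) (by simp))
    exact h.congr_fderiv (by simp)
  have hx : HasFDerivAt (fun v => (scaledField N φ K r B C (τ, v)).2.2)
      (0 : ℝ × ℝ × ℝ →L[ℝ] ℝ) 0 := by
    simp only [scaledField]
    refine hasFDerivAt_mul_zero (by fun_prop) (by fun_prop) (by simp) ?_
    have : K (0, 0, 0) = 0 := hK0
    simp [this]
  have h := hw.prodMk ((hasFDerivAt_const (0 : ℝ) (0 : ℝ × ℝ × ℝ)).prodMk hx)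
  exact h.congr_fderiv (by ext <;> simp)

/-- Rescaling time by `τ` conjugates `scaledField` to itself through `scaling`. -/
theorem hasDerivAt_scaling_comp_mul (hφ : Differentiable ℝ φ) {U : ℝ → ℝ × ℝ × ℝ} {τ s : ℝ}
    (hτ : 0 < τ) (hs : 0 < s)
    (hU : HasDerivAt U
      (scaledField N φ K r B C ((τ * s, τ * s * Real.log (τ * s)), U (τ * s))) (τ * s)) :
    HasDerivAt (fun s => scaling N φ τ (U (τ * s)))
      (scaledField N φ K r B C ((s, s * Real.log s), scaling N φ τ (U (τ * s)))) s := by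
  have hmul : HasDerivAt (fun s : ℝ => τ * s) τ s := by
    simpa using (hasDerivAt_id s).const_mul τ
  have hc := hU.scomp s hmul
  have h1 := (hasFDerivAt_fst (𝕜 := ℝ)).comp_hasDerivAt s hc
  have h2 := (hasFDerivAt_snd (𝕜 := ℝ)).comp_hasDerivAt s hc
  have hη := (hasFDerivAt_fst (𝕜 := ℝ)).comp_hasDerivAt s h2
  have hx := (hasFDerivAt_snd (𝕜 := ℝ)).comp_hasDerivAt s h2
  have hφx := (hφ (U (τ * s)).2.2).hasDerivAt.comp s hx
  have hw := (h1.add (((hφx.mul (hη.pow (N + 1))).mul_const (Real.log τ)).const_mul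
    (3 : ℝ))).const_mul (τ ^ (3 * N + 3))
  have H := hw.prodMk ((hη.const_mul (τ ^ 3)).prodMk hx)
  refine H.congr_deriv ?_
  simp only [Pi.pow_apply, Function.comp_apply]
  obtain ⟨w, η, x⟩ := U (τ * s)
  have hlog : Real.log (τ * s) = Real.log τ + Real.log s := Real.log_mul hτ.ne' hs.ne'
  have hz1 : s ^ 3 * (τ ^ 3 * η) = (τ * s) ^ 3 * η := by ring
  have hz2 : s ^ (3 * N + 2) * (s * (τ ^ (3 * N + 3) * (w + 3 * (φ x * η ^ (N + 1) * Real.log τ))) +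
      3 * φ x * (τ ^ 3 * η) ^ (N + 1) * (s * Real.log s)) = (τ * s) ^ (3 * N + 2) *
        (τ * s * w + 3 * φ x * η ^ (N + 1) * (τ * s * (Real.log τ + Real.log s))) := by ring
  simp only [scaledField, scaling, hlog, hz1, hz2,
    ContinuousLinearMap.coe_fst', ContinuousLinearMap.coe_snd', Prod.smul_mk, smul_eq_mul]
  generalize ((τ * s) ^ 3 * η, x, (τ * s) ^ (3 * N + 2) *
        (τ * s * w + 3 * φ x * η ^ (N + 1) * (τ * s * (Real.log τ + Real.log s)))) = z
  refine Prod.ext ?_ (Prod.ext ?_ ?_)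
  · simp only
    ring
  · simp
  · simp only
    ring

theorem hasDerivAt_scaling_one {φ : ℝ → ℝ} (hφ : Differentiable ℝ φ) {U : ℝ → ℝ × ℝ × ℝ}
    {U' : ℝ × ℝ × ℝ} (hU : HasDerivAt U U' 1) :
    HasDerivAt (fun τ => scaling N φ τ (U τ))
      (((3 * N + 3 : ℝ) * (U 1).1 + 3 * (φ (U 1).2.2 * (U 1).2.1 ^ (N + 1)), 3 * (U 1).2.1, 0)
        + U') 1 := by
  have h1 := (hasFDerivAt_fst (𝕜 := ℝ)).comp_hasDerivAt 1 hU
  have h2 := (hasFDerivAt_snd (𝕜 := ℝ)).comp_hasDerivAt 1 hU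
  have hη := (hasFDerivAt_fst (𝕜 := ℝ)).comp_hasDerivAt 1 h2
  have hx := (hasFDerivAt_snd (𝕜 := ℝ)).comp_hasDerivAt 1 h2
  have hφx := (hφ (U 1).2.2).hasDerivAt.comp 1 hx
  have hw := (hasDerivAt_pow (3 * N + 3) (1 : ℝ)).mul
    (h1.add (((hφx.mul (hη.pow (N + 1))).mul
      (Real.hasDerivAt_log one_ne_zero)).const_mul (3 : ℝ)))
  have H := hw.prodMk (((hasDerivAt_pow 3 (1 : ℝ)).mul hη).prodMk hx)
  refine H.congr_deriv ?_
  refine Prod.ext ?_ (Prod.ext ?_ ?_)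
  · simp
    ring
  · simp
  · simp

end

/-- Near the origin, a local diffeomorphism tangent to the identity conjugates the normal form
to `reducedField`. -/
theorem exists_conjugacy_reducedField (N : ℕ) {φ : ℝ → ℝ} {K r B C : ℝ × ℝ × ℝ → ℝ}
    (hφ : ContDiff ℝ (⊤ : ℕ∞) φ) (hK : ContDiff ℝ (⊤ : ℕ∞) K)
    (hr : ContDiff ℝ (⊤ : ℕ∞) r) (hB : ContDiff ℝ (⊤ : ℕ∞) B) (hC : ContDiff ℝ (⊤ : ℕ∞) C)
    (hK0 : K 0 = 0) :
    ∃ (Ψ : ℝ × ℝ × ℝ → ℝ × ℝ × ℝ) (O : Set (ℝ × ℝ × ℝ)), IsOpen O ∧ 0 ∈ O ∧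
      ContDiffOn ℝ (⊤ : ℕ∞) Ψ O ∧ Ψ 0 = 0 ∧
      HasFDerivAt Ψ (ContinuousLinearMap.id ℝ (ℝ × ℝ × ℝ)) 0 ∧
      ∀ c ∈ O, fderiv ℝ Ψ c ((N + 1 : ℝ) * c.1 + φ c.2.2 * c.2.1 ^ (N + 1), c.2.1, 0) =
        reducedField N φ K r B C (Ψ c) := by
  have hG := contDiff_scaledField (N := N) hφ hK hr hB hC
  have hφd := hφ.differentiable (by simp)
  set G := scaledField N φ K r B C with hGdef
  let l : C(unitInterval, ℝ × ℝ) := ⟨fun s => ((s : ℝ), (s : ℝ) * Real.log s),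
    continuous_subtype_val.prodMk (Real.continuous_mul_log.comp continuous_subtype_val)⟩
  obtain ⟨S, O, ε, hε, hO, h0O, hS, hS0, hSd, hsol, huniq⟩ := exists_smooth_solution G hG l
    (fun s => scaledField_zero (l s))
    (fun s => hasFDerivAt_scaledField_zero hφ hK hr hB hC hK0 (l s))
  have hscal0 : scaling N φ 1 0 = 0 := by simp [scaling]
  have hscalc : ContinuousAt (fun y : ℝ × ℝ × ℝ × ℝ => scaling N φ y.1 y.2) (1, 0) := by
    have hφc := hφ.continuous
    have hlog : ContinuousAt (fun y : ℝ × ℝ × ℝ × ℝ => Real.log y.1) (1, 0) :=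
      ContinuousAt.log continuousAt_fst one_ne_zero
    have hφ2 : ContinuousAt (fun y : ℝ × ℝ × ℝ × ℝ => φ y.2.2.2 * y.2.2.1 ^ (N + 1)) (1, 0) :=
      Continuous.continuousAt (by fun_prop)
    have h1 := hφ2.mul hlog
    have h2 : ContinuousAt (fun y : ℝ × ℝ × ℝ × ℝ => y.1 ^ (3 * N + 3)) (1, 0) :=
      Continuous.continuousAt (by fun_prop)
    have h3 : ContinuousAt (fun y : ℝ × ℝ × ℝ × ℝ => y.2.1) (1, 0) :=
      Continuous.continuousAt (by fun_prop)
    have h4 : ContinuousAt (fun y : ℝ × ℝ × ℝ × ℝ => (y.1 ^ 3 * y.2.2.1, y.2.2.2)) (1, 0) :=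
      Continuous.continuousAt (by fun_prop)
    exact (h2.mul (h3.add (h1.const_mul 3))).prodMk h4
  obtain ⟨δ, hδ, hsmall⟩ := Metric.continuousAt_iff.1 hscalc (ε / 2) (half_pos hε)
  let O' := O ∩ S ⁻¹' Metric.ball 0 δ
  have hO' : IsOpen O' := hS.continuousOn.isOpen_inter_preimage hO Metric.isOpen_ball
  have hev : ContDiff ℝ (⊤ : ℕ∞) (fun u : C(unitInterval, ℝ × ℝ × ℝ) => u 1) :=
    (ContinuousMap.evalCLM ℝ (1 : unitInterval) (M := ℝ × ℝ × ℝ)).contDiff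
  have hΨ : ContDiffOn ℝ (⊤ : ℕ∞) (fun c => S c 1) O' :=
    (hev.comp_contDiffOn hS).mono Set.inter_subset_left
  refine ⟨fun c => S c 1, O', hO', ⟨h0O, by simp [hS0, hδ]⟩, hΨ, by simp [hS0], hSd, ?_⟩
  rintro c ⟨hcO, hcδ⟩
  have hcδ' : ‖S c‖ < δ := by simpa using hcδ
  let rhs : ℝ → ℝ × ℝ × ℝ := fun s =>
    G (l (Set.projIcc 0 1 zero_le_one s), S c (Set.projIcc 0 1 zero_le_one s))
  have hrhs : Continuous rhs := hG.continuous.comp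
    ((l.continuous.comp continuous_projIcc).prodMk ((S c).continuous.comp continuous_projIcc))
  let U : ℝ → ℝ × ℝ × ℝ := fun s => c + ∫ r in (0 : ℝ)..s, rhs r
  have hUd : ∀ s, HasDerivAt U (rhs s) s := fun s =>
    ((hrhs.integral_hasStrictDerivAt 0 s).hasDerivAt).const_add c
  have hUc : Continuous U := continuous_iff_continuousAt.2 fun s => (hUd s).continuousAt
  have hU0 : U 0 = c := by simp [U]
  have hUS : ∀ s : unitInterval, U s = S c s := fun s => (hsol c hcO s).symm
  have hrhsU : ∀ s ∈ Set.Icc (0 : ℝ) 1, rhs s = G ((s, s * Real.log s), U s) := by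
    intro s hs
    simp only [rhs]
    rw [Set.projIcc_of_mem _ hs, ← hUS]
    rfl
  have hinv : ∀ τ : ℝ, 0 < τ → τ ≤ 1 → dist τ 1 < δ →
      scaling N φ τ (U τ) = S (scaling N φ τ c) 1 := by
    intro τ hτ hτ1 hτδ
    have hcont : Continuous fun s : ℝ => scaling N φ τ (U (τ * s)) := by
      have hφc := hφ.continuous
      unfold scaling
      fun_prop
    let u : C(unitInterval, ℝ × ℝ × ℝ) :=
      ⟨fun s => scaling N φ τ (U (τ * s)), hcont.comp continuous_subtype_val⟩
    have hmem : ∀ s ∈ Set.Icc (0 : ℝ) 1, τ * s ∈ Set.Icc (0 : ℝ) 1 := fun s hs =>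
      ⟨mul_nonneg hτ.le hs.1, mul_le_one₀ hτ1 hs.1 hs.2⟩
    have hu : ‖u‖ < ε := by
      refine lt_of_le_of_lt ((ContinuousMap.norm_le _ (half_pos hε).le).2 fun s => ?_)
        (half_lt_self hε)
      have h1 : ‖U (τ * s)‖ < δ := by
        have := hUS ⟨τ * s, hmem s s.2⟩
        simp only at this
        rw [this]
        exact ((S c).norm_coe_le_norm _).trans_lt hcδ'
      have h2 : dist ((τ, U (τ * s)) : ℝ × ℝ × ℝ × ℝ) (1, 0) < δ := by
        rw [Prod.dist_eq]
        exact max_lt hτδ (by simpa using h1)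
      have h3 := hsmall h2
      simp only [hscal0, dist_zero_right] at h3
      exact h3.le
    have key := huniq (scaling N φ τ c) u hu ?_
    · have := DFunLike.congr_fun key 1
      simpa [u] using this
    · intro s
      have hint := intervalIntegral.integral_eq_sub_of_hasDerivAt_of_le (a := 0) (b := (s : ℝ))
        (f := fun s : ℝ => scaling N φ τ (U (τ * s)))
        (f' := fun r => G (l (Set.projIcc 0 1 zero_le_one r),
          u (Set.projIcc 0 1 zero_le_one r))) s.2.1 hcont.continuousOn ?_ ?_
      · rw [hint]
        simp [u, hU0]
      · intro r hr
        have hr1 : r ∈ Set.Icc (0 : ℝ) 1 := ⟨hr.1.le, hr.2.le.trans s.2.2⟩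
        have h1 := hUd (τ * r)
        rw [hrhsU _ (hmem r hr1)] at h1
        have h2 := hasDerivAt_scaling_comp_mul hφd hτ hr.1 h1
        rw [Set.projIcc_of_mem _ hr1]
        exact h2
      · exact (hG.continuous.comp ((l.continuous.comp continuous_projIcc).prodMk
          (u.continuous.comp continuous_projIcc))).intervalIntegrable _ _
  have hone : scaling N φ 1 c = c := by
    simp [scaling]
  have hL := (hasDerivAt_scaling_one (N := N) hφd (hUd 1)).hasDerivWithinAt (s := Set.Iic 1)
  have hΨd : HasFDerivAt (fun c => S c 1) (fderiv ℝ (fun c => S c 1) c) (scaling N φ 1 c) := by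
    rw [hone]
    exact ((hΨ.contDiffAt (hO'.mem_nhds ⟨hcO, hcδ⟩)).differentiableAt (by simp)).hasFDerivAt
  have hR := (hΨd.comp_hasDerivAt 1
    (hasDerivAt_scaling_one (N := N) hφd (hasDerivAt_const 1 c))).hasDerivWithinAt (s := Set.Iic 1)
  have heq : (fun τ => scaling N φ τ (U τ)) =ᶠ[𝓝[Set.Iic 1] 1]
      ((fun c => S c 1) ∘ fun τ => scaling N φ τ c) := by
    have h1 : ∀ᶠ τ : ℝ in 𝓝[Set.Iic 1] 1, 0 < τ :=
      nhdsWithin_le_nhds (lt_mem_nhds one_pos)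
    have h2 : ∀ᶠ τ : ℝ in 𝓝[Set.Iic 1] 1, dist τ 1 < δ :=
      nhdsWithin_le_nhds (Metric.ball_mem_nhds 1 hδ)
    filter_upwards [h1, h2, self_mem_nhdsWithin] with τ hτ hτδ hτ1
    exact hinv τ hτ hτ1 hτδ
  have hR' := hR.congr_of_eventuallyEq heq (heq.self_of_nhdsWithin (Set.mem_Iic.2 le_rfl))
  have hfin := (uniqueDiffWithinAt_Iic (1 : ℝ)).eq_deriv _ hR' hL
  have hU1 : U 1 = S c 1 := hUS 1
  rw [hrhsU 1 (by simp), hU1, Real.log_one, mul_zero] at hfin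
  have hvec : (((3 * N + 3 : ℝ) * c.1 + 3 * (φ c.2.2 * c.2.1 ^ (N + 1)), 3 * c.2.1, 0) +
      (0 : ℝ × ℝ × ℝ)) =
      (3 : ℝ) • ((N + 1 : ℝ) * c.1 + φ c.2.2 * c.2.1 ^ (N + 1), c.2.1, (0 : ℝ)) := by
    rw [add_zero, Prod.smul_mk, Prod.smul_mk]
    simp only [smul_eq_mul, mul_zero]
    refine Prod.ext ?_ rfl
    simp only
    ring
  rw [hvec, map_smul] at hfin
  have h3 : ∀ v : ℝ × ℝ × ℝ, ((3 * N + 3 : ℝ) * v.1 + 3 * (φ v.2.2 * v.2.1 ^ (N + 1)),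
      3 * v.2.1, 0) + G ((1, 0), v) = (3 : ℝ) • reducedField N φ K r B C v := by
    rintro ⟨w, η, x⟩
    simp only [hGdef, scaledField, reducedField, Prod.mk_add_mk, Prod.smul_mk, smul_eq_mul,
      one_pow, one_mul, mul_one, mul_zero, add_zero, zero_add, zero_mul, sub_zero]
    refine Prod.ext ?_ (Prod.ext rfl ?_)
    · simp only
      ring
    · simp only
      ring
  rw [h3] at hfin
  exact smul_right_injective _ (three_ne_zero) hfin

/-- A conjugacy of `N` with `V` whose derivative at the marked point is invertible yields
orbital equivalence. -/
theorem orbEquiv_of_conjugacy {E : Type*} [NormedAddCommGroup E] [NormedSpace ℝ E]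
    [CompleteSpace E] {Dom Ω O : Set E} {V N Ψ : E → E} {z₀ y₀ : E} (hΩ : IsOpen Ω)
    (hΩD : Ω ⊆ Dom) (hz₀ : z₀ ∈ Ω) (hO : IsOpen O) (hy₀ : y₀ ∈ O)
    (hΨ : ContDiffOn ℝ (⊤ : ℕ∞) Ψ O) (hΨ₀ : Ψ y₀ = z₀) {L : E ≃L[ℝ] E}
    (hL : HasFDerivAt Ψ (L : E →L[ℝ] E) y₀)
    (hconj : ∀ c ∈ O, Ψ c ∈ Ω → fderiv ℝ Ψ c (N c) = V (Ψ c)) :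
    OrbEquiv Dom V N z₀ y₀ := by
  have hO' : IsOpen (O ∩ Ψ ⁻¹' Ω) := hΨ.continuousOn.isOpen_inter_preimage hO hΩ
  obtain ⟨e, he, hes, hesub, hesymm⟩ := exists_smooth_openPartialHomeomorph hO'
    (hΨ.mono Set.inter_subset_left) (a := y₀) ⟨hy₀, by simpa [hΨ₀] using hz₀⟩ hL
  have hey : e y₀ = z₀ := (he y₀).trans hΨ₀
  have hecoe : (e : E → E) = Ψ := funext he
  refine ⟨e.target, e.source, e.symm, e, fun _ => 1, e.open_target, e.open_source,
    hey ▸ e.map_source hes, hes, ?_, hesymm, ?_, ?_, e.symm.mapsTo, e.mapsTo,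
    fun x hx => e.right_inv hx, fun y hy => e.left_inv hy, contDiffOn_const,
    fun _ _ => one_ne_zero, ?_⟩
  · intro x hx
    have h1 := (hesub (e.map_target hx)).2
    rw [Set.mem_preimage, ← he, e.right_inv hx] at h1
    exact hΩD h1
  · rw [hecoe]
    exact hΨ.mono fun y hy => (hesub hy).1
  · rw [← hey]
    exact e.left_inv hes
  · intro x hx
    have hc := e.map_target hx
    have hcO := hesub hc
    have hΨc : Ψ (e.symm x) = x := (he _).symm.trans (e.right_inv hx)
    have hcj := hconj _ hcO.1 hcO.2
    rw [hΨc] at hcj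
    have hd1 : HasFDerivAt Ψ (fderiv ℝ Ψ (e.symm x)) (e.symm x) :=
      ((hΨ.contDiffAt (hO.mem_nhds hcO.1)).differentiableAt (by simp)).hasFDerivAt
    have hd2 : HasFDerivAt e.symm (fderiv ℝ e.symm x) (Ψ (e.symm x)) := by
      rw [hΨc]
      exact ((hesymm.contDiffAt (e.open_target.mem_nhds hx)).differentiableAt
        (by simp)).hasFDerivAt
    have hcomp := hd2.comp _ hd1
    have hid : HasFDerivAt (e.symm ∘ Ψ) (ContinuousLinearMap.id ℝ E) (e.symm x) := by
      refine (hasFDerivAt_id _).congr_of_eventuallyEq ?_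
      filter_upwards [e.open_source.mem_nhds hc] with y hy
      rw [Function.comp_apply, ← he, e.left_inv hy, id]
    have huniq := DFunLike.congr_fun (hcomp.unique hid) (N (e.symm x))
    rw [ContinuousLinearMap.comp_apply, hcj] at huniq
    rw [huniq, one_smul]
    rfl

/-- A function smooth near a point agrees near that point with a globally smooth function. -/
theorem exists_contDiff_eventuallyEq {E : Type*} [NormedAddCommGroup E] [NormedSpace ℝ E]
    [FiniteDimensional ℝ E] {Ω : Set E} (hΩ : IsOpen Ω) {f : E → ℝ}
    (hf : ContDiffOn ℝ (⊤ : ℕ∞) f Ω) {z : E} (hz : z ∈ Ω) :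
    ∃ F : E → ℝ, ContDiff ℝ (⊤ : ℕ∞) F ∧ F =ᶠ[𝓝 z] f := by
  obtain ⟨ρ, hρ, hball⟩ := Metric.isOpen_iff.1 hΩ z hz
  let χ : ContDiffBump z := ⟨ρ / 4, ρ / 2, by positivity, by linarith⟩
  have hsub : tsupport χ ⊆ Ω := by
    rw [χ.tsupport_eq]
    exact (Metric.closedBall_subset_ball (by change ρ / 2 < ρ; linarith)).trans hball
  refine ⟨fun y => χ y * f y, contDiff_iff_contDiffAt.2 fun y => ?_, ?_⟩
  · by_cases hy : y ∈ tsupport χ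
    · exact χ.contDiffAt.mul (hf.contDiffAt (hΩ.mem_nhds (hsub hy)))
    · refine contDiffAt_const (c := (0 : ℝ)) |>.congr_of_eventuallyEq ?_
      filter_upwards [(isClosed_tsupport χ).isOpen_compl.mem_nhds hy] with x hx
      rw [image_eq_zero_of_notMem_tsupport hx, zero_mul]
  · filter_upwards [χ.eventuallyEq_one] with y hy
    simp [hy]

/-- Metric of Klein type `(α dx² + γ dt²)/t^{2n}`: at a singular point `(0, x*)` the germ
of `V = (t, pt, −M/(2αγ))` at `(0, x*, 0)` is `C^∞`-smoothly orbitally equivalent to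
`ξ̇ = n·ξ + φ(ζ)·ηⁿ, η̇ = η, ζ̇ = 0` for some `C^∞` function `φ` of one real variable. -/
theorem stmt18 (D : Set (ℝ × ℝ)) (hD : IsOpen D) (n : ℕ) (hn : 0 < n)
    (α γ : ℝ × ℝ → ℝ)
    (hα : ContDiffOn ℝ (⊤ : ℕ∞) α D) (hγ : ContDiffOn ℝ (⊤ : ℕ∞) γ D)
    (hαpos : ∀ q ∈ D, 0 < α q) (hγpos : ∀ q ∈ D, 0 < γ q)
    (μ₃ μ₂ μ₁ μ₀ : ℝ × ℝ → ℝ)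
    (hμ₃ : μ₃ = fun q => α q * (q.1 * d1 α q - 2 * n * α q))
    (hμ₂ : μ₂ = fun q => q.1 * (d2 α q * γ q - 2 * α q * d2 γ q))
    (hμ₁ : μ₁ = fun q => q.1 * (2 * d1 α q * γ q - α q * d1 γ q) - 2 * n * α q * γ q)
    (hμ₀ : μ₀ = fun q => -(q.1 * γ q * d2 γ q))
    (M : ℝ × ℝ × ℝ → ℝ)
    (hM : M = fun z => μ₃ (z.1, z.2.1) * z.2.2 ^ 3 + μ₂ (z.1, z.2.1) * z.2.2 ^ 2 +
      μ₁ (z.1, z.2.1) * z.2.2 + μ₀ (z.1, z.2.1))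
    (V : ℝ × ℝ × ℝ → ℝ × ℝ × ℝ)
    (hV : V = fun z => (z.1, z.2.2 * z.1,
      -M z / (2 * α (z.1, z.2.1) * γ (z.1, z.2.1))))
    (xs : ℝ) (hq : ((0 : ℝ), xs) ∈ D) :
    V ((0 : ℝ), xs, (0 : ℝ)) = 0 ∧
    ∃ φ : ℝ → ℝ, ContDiff ℝ (⊤ : ℕ∞) φ ∧
      OrbEquiv {z : ℝ × ℝ × ℝ | (z.1, z.2.1) ∈ D} V
        (fun y : ℝ × ℝ × ℝ => ((n : ℝ) * y.1 + φ y.2.2 * y.2.1 ^ n, y.2.1, (0 : ℝ)))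
        ((0 : ℝ), xs, (0 : ℝ)) 0 := by
  have hne : ∀ q ∈ D, α q ≠ 0 ∧ γ q ≠ 0 := fun q hqD => ⟨(hαpos q hqD).ne', (hγpos q hqD).ne'⟩
  obtain ⟨N, rfl⟩ : ∃ N, n = N + 1 := ⟨n - 1, by omega⟩
  refine ⟨by simp [hV, hM, hμ₀], ?_⟩
  let Dom : Set (ℝ × ℝ × ℝ) := {z | (z.1, z.2.1) ∈ D}
  have hpr : ContDiff ℝ (⊤ : ℕ∞) (fun z : ℝ × ℝ × ℝ => (z.1, z.2.1)) := by fun_prop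
  have hDom : IsOpen Dom := hD.preimage hpr.continuous
  have hmaps : Set.MapsTo (fun z : ℝ × ℝ × ℝ => (z.1, z.2.1)) Dom D := fun z hz => hz
  have hpart : ∀ f : ℝ × ℝ → ℝ, ContDiffOn ℝ (⊤ : ℕ∞) f D → ∀ v,
      ContDiffOn ℝ (⊤ : ℕ∞) (fun q => fderiv ℝ f q v) D := fun f hf v =>
    (hf.fderiv_of_isOpen hD (m := (⊤ : ℕ∞)) (by simp)).clm_apply contDiffOn_const
  have hlift : ∀ f : ℝ × ℝ → ℝ, ContDiffOn ℝ (⊤ : ℕ∞) f D →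
      ContDiffOn ℝ (⊤ : ℕ∞) (fun z : ℝ × ℝ × ℝ => f (z.1, z.2.1)) Dom := fun f hf =>
    hf.comp hpr.contDiffOn hmaps
  have hα' := hlift α hα
  have hγ' := hlift γ hγ
  have hαt := hlift (d1 α) (hpart α hα _)
  have hαx := hlift (d2 α) (hpart α hα _)
  have hγt := hlift (d1 γ) (hpart γ hγ _)
  have hγx := hlift (d2 γ) (hpart γ hγ _)
  have hp : ContDiffOn ℝ (⊤ : ℕ∞) (fun z : ℝ × ℝ × ℝ => z.2.2) Dom := by fun_prop
  let r₀ : ℝ × ℝ × ℝ → ℝ := fun z =>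
    -(α (z.1, z.2.1) * d1 α (z.1, z.2.1) * z.2.2 ^ 3 +
      (d2 α (z.1, z.2.1) * γ (z.1, z.2.1) - 2 * α (z.1, z.2.1) * d2 γ (z.1, z.2.1)) * z.2.2 ^ 2 +
      (2 * d1 α (z.1, z.2.1) * γ (z.1, z.2.1) - α (z.1, z.2.1) * d1 γ (z.1, z.2.1)) * z.2.2 -
      γ (z.1, z.2.1) * d2 γ (z.1, z.2.1)) / (2 * α (z.1, z.2.1) * γ (z.1, z.2.1))
  let C₀ : ℝ × ℝ × ℝ → ℝ := fun z => (N + 1) * α (z.1, z.2.1) * z.2.2 / γ (z.1, z.2.1)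
  have hr₀ : ContDiffOn ℝ (⊤ : ℕ∞) r₀ Dom := by
    refine ContDiffOn.div (((((hα'.mul hαt).mul (hp.pow 3)).add
      (((hαx.mul hγ').sub ((contDiffOn_const.mul hα').mul hγx)).mul (hp.pow 2))).add
      ((((contDiffOn_const.mul hαt).mul hγ').sub (hα'.mul hγt)).mul hp)).sub (hγ'.mul hγx)).neg
      ((contDiffOn_const.mul hα').mul hγ') fun z hz => ?_
    have := hne _ hz
    simp [this.1, this.2]
  have hC₀ : ContDiffOn ℝ (⊤ : ℕ∞) C₀ Dom :=
    ContDiffOn.div ((contDiffOn_const.mul hα').mul hp) hγ' fun z hz => (hne _ hz).2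
  have hVD : ∀ z ∈ Dom, V z =
      (z.1, z.2.2 * z.1, (N + 1) * z.2.2 + z.1 * r₀ z + z.2.2 ^ 2 * C₀ z) := by
    intro z hz
    obtain ⟨h1, h2⟩ := hne _ hz
    simp only [hV, hM, hμ₀, hμ₁, hμ₂, hμ₃, r₀, C₀]
    refine Prod.ext rfl (Prod.ext rfl ?_)
    push_cast
    field_simp
    ring
  obtain ⟨r₁, hr₁, hr₁e⟩ := exists_contDiff_eventuallyEq hDom hr₀ (z := (0, xs, 0)) hq
  obtain ⟨C₁, hC₁, hC₁e⟩ := exists_contDiff_eventuallyEq hDom hC₀ (z := (0, xs, 0)) hq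
  obtain ⟨Ω, hΩsub, hΩ, hzΩ⟩ := mem_nhds_iff.1
    (inter_mem (inter_mem hr₁e hC₁e) (hDom.mem_nhds (x := (0, xs, 0)) hq))
  obtain ⟨a, at', ax, φ, r', B', C', ha, hφ, hr', hB', hC', ha0, had, heq⟩ :=
    exists_reduction (N + 1) N 0 (by omega) (fun z => z.2.2) (fun z => r₁ (z.1, xs + z.2.1, z.2.2))
      (fun _ => 0) (fun z => C₁ (z.1, xs + z.2.1, z.2.2)) (by fun_prop) (by fun_prop)
      (by fun_prop) (by fun_prop)
  obtain ⟨Ψ₀, O, hO, h0O, hΨ₀, hΨ₀0, hΨ₀d, hconj⟩ := exists_conjugacy_reducedField N hφ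
    (K := fun z => z.2.2 + a (z.1, z.2.1)) (by fun_prop) hr' hB' hC' (by simpa using ha0 0)
  let Θ : ℝ × ℝ × ℝ → ℝ × ℝ × ℝ := fun v => (v.2.1, xs + v.2.2, v.1 + a v.2)
  have hΘ : ContDiff ℝ (⊤ : ℕ∞) Θ := by fun_prop
  let L : ℝ × ℝ → (ℝ × ℝ × ℝ) ≃L[ℝ] (ℝ × ℝ × ℝ) := fun q => LinearEquiv.toContinuousLinearEquiv
    { toFun := fun v => (v.2.1, v.2.2, v.1 + (at' q * v.2.1 + ax q * v.2.2))
      invFun := fun v => (v.2.2 - (at' q * v.1 + ax q * v.2.1), v.1, v.2.1)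
      map_add' := fun v w => by
        refine Prod.ext rfl (Prod.ext rfl ?_)
        simp only [Prod.fst_add, Prod.snd_add]
        ring
      map_smul' := fun s v => by
        refine Prod.ext rfl (Prod.ext rfl ?_)
        simp only [Prod.smul_fst, Prod.smul_snd, smul_eq_mul, RingHom.id_apply]
        ring
      left_inv := fun v => by simp
      right_inv := fun v => by simp }
  have hLapp : ∀ q v, (L q : ℝ × ℝ × ℝ →L[ℝ] ℝ × ℝ × ℝ) v =
    (v.2.1, v.2.2, v.1 + (at' q * v.2.1 + ax q * v.2.2)) := fun q v => rfl
  have hΘd : ∀ v, HasFDerivAt Θ (L v.2 : ℝ × ℝ × ℝ →L[ℝ] ℝ × ℝ × ℝ) v := by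
    intro v
    have h2 : HasFDerivAt (fun v : ℝ × ℝ × ℝ => v.2) (ContinuousLinearMap.snd ℝ ℝ (ℝ × ℝ)) v :=
      hasFDerivAt_snd
    have hη := (hasFDerivAt_fst (𝕜 := ℝ) (p := v.2)).comp v h2
    have hx := ((hasFDerivAt_snd (𝕜 := ℝ) (p := v.2)).comp v h2).const_add xs
    have hw := (hasFDerivAt_fst (𝕜 := ℝ) (p := v)).add ((had v.2).comp v h2)
    refine (hη.prodMk (hx.prodMk hw)).congr_fderiv ?_
    refine ContinuousLinearMap.ext fun w => ?_
    rw [hLapp]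
    rfl
  have hVΘ : ∀ v, Θ v ∈ Ω → L v.2 (reducedField N φ (fun z => z.2.2 + a (z.1, z.2.1)) r' B' C' v) =
      V (Θ v) := by
    rintro ⟨w, η, x⟩ hv
    obtain ⟨⟨h1, h2⟩, h3⟩ := hΩsub hv
    have h1' : r₁ (η, xs + x, w + a (η, x)) = r₀ (η, xs + x, w + a (η, x)) := h1
    have h2' : C₁ (η, xs + x, w + a (η, x)) = C₀ (η, xs + x, w + a (η, x)) := h2
    have hk := heq η x w
    rw [hVD _ h3]
    change (L (η, x) : ℝ × ℝ × ℝ →L[ℝ] ℝ × ℝ × ℝ) _ = _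
    rw [hLapp]
    simp only [reducedField, Θ]
    refine Prod.ext rfl (Prod.ext ?_ ?_)
    · exact mul_comm _ _
    · simp only
      rw [← h1', ← h2']
      push_cast at hk
      linear_combination hk
  refine ⟨φ, hφ, orbEquiv_of_conjugacy (Ψ := Θ ∘ Ψ₀) (L := L 0) hΩ
    (fun z hz => (hΩsub hz).2) hzΩ hO h0O (hΘ.comp_contDiffOn hΨ₀) ?_ ?_ ?_⟩
  · simp [Θ, hΨ₀0, ha0, show (0 : ℝ × ℝ) = (0, 0) from rfl]
  · have h1 := hΘd (Ψ₀ 0)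
    have h2 := h1.comp (0 : ℝ × ℝ × ℝ) hΨ₀d
    rw [hΨ₀0] at h2
    exact h2.congr_fderiv (ContinuousLinearMap.comp_id _)
  · intro c hc hcΩ
    have hd : HasFDerivAt Ψ₀ (fderiv ℝ Ψ₀ c) c :=
      ((hΨ₀.contDiffAt (hO.mem_nhds hc)).differentiableAt (by simp)).hasFDerivAt
    rw [((hΘd (Ψ₀ c)).comp c hd).fderiv, ContinuousLinearMap.comp_apply]
    push_cast
    rw [hconj c hc]
    exact hVΘ _ hcΩ
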